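/- arXiv:1610.03669 — 2 statements merged into one kernel-verified Lean document; each statement's English description precedes it below -/
import Mathlib

section
/- Let G be a finite group of order n satisfying 5·ψ(G) ≥ 3·n·φ(n), where φ is Euler's totient function. Then G is solvable and the second derived subgroup G'' is contained in the center Z(G). -/
/-- `psi G` is the sum of the orders of all elements of the finite group `G`. -/
noncomputable def psi (G : Type*) [Group G] [Fintype G] : ℕ := ∑ x : G, orderOf x

/-!
Compare `ψ(G)` with `n φ(n)`, which is what the generators of a cyclic group of order `n`
contribute. If all primes dividing `n` are at most `p`, then `φ(n) / n` is bounded below by a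
Mertens product, so a cyclic subgroup `A` generated by an element of maximal order has small index.

For `p ≥ 5` this index is below `2p`, and squarefree unless it is below `p`. Suppose first that `A`
is a maximal subgroup of squarefree index. If `A` is normal, then `G' ≤ A`; if not, then all Sylow
subgroups of `G / Z(G)` are cyclic, so `G / Z(G)` is metabelian. Otherwise `A` contains a normal
Sylow `p`-subgroup `P`; dividing by `P` weakens the hypothesis by a factor of at most
`1 + 1 / (p (p - 1))`, and since `G'` centralizes `P`, Burnside's transfer theorem lifts the
conclusion from `G / P` to `G`. The losses accumulated over the primes above `p` stay below
`1 + 1 / (2p)`, and once only the primes `2` and `3` remain, `A` has index at most `5`.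
-/

section GroupTheory

open Subgroup

variable {G : Type*} [Group G]

theorem derivedSeries_two_eq_bot_of_commutator_le {N : Subgroup G} [IsMulCommutative N]
    (h : commutator G ≤ N) : derivedSeries G 2 = ⊥ := by
  rw [derivedSeries_succ, derivedSeries_one, eq_bot_iff]
  exact (commutator_mono h h).trans (commutator_self_eq_bot_iff.mpr inferInstance).le

theorem isSolvable_of_derivedSeries_two_le_center (h : derivedSeries G 2 ≤ center G) :
    Group.IsSolvable G := by
  refine ⟨3, ?_⟩
  rw [derivedSeries_succ, commutator_eq_bot_iff_le_centralizer]
  exact h.trans (center_le_centralizer _)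

theorem derivedSeries_two_le_of_quotient {K : Subgroup G} [K.Normal]
    (h : derivedSeries (G ⧸ K) 2 = ⊥) : derivedSeries G 2 ≤ K := by
  rw [← map_derivedSeries_eq (QuotientGroup.mk'_surjective K), Subgroup.map_eq_bot_iff,
    QuotientGroup.ker_mk'] at h
  exact h

theorem normal_of_le_of_isCyclic {K U : Subgroup G} [hK : K.Normal] [IsCyclic K]
    (hU : U ≤ K) : U.Normal := by
  have : IsCyclic U := isCyclic_of_le hU
  obtain ⟨k, rfl⟩ := (Subgroup.isCyclic_iff_exists_zpowers_eq_top K).mp inferInstance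
  obtain ⟨u, rfl⟩ := (Subgroup.isCyclic_iff_exists_zpowers_eq_top U).mp inferInstance
  obtain ⟨m, rfl⟩ := mem_zpowers_iff.mp (hU (mem_zpowers u))
  refine ⟨fun y hy g => ?_⟩
  obtain ⟨i, rfl⟩ := mem_zpowers_iff.mp hy
  obtain ⟨j, hj⟩ := mem_zpowers_iff.mp (hK.conj_mem k (mem_zpowers k) g)
  refine mem_zpowers_iff.mpr ⟨j * i, ?_⟩
  rw [← conj_zpow, ← conj_zpow, ← hj, ← zpow_mul, ← zpow_mul, ← zpow_mul]
  congr 1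
  ring

-- The automorphism group of a cyclic group is abelian, so conjugation by commutators is trivial.
theorem commutator_le_centralizer_of_isCyclic (K : Subgroup G) [K.Normal] [IsCyclic K] :
    commutator G ≤ centralizer K := by
  intro c hc
  have hker := Abelianization.commutator_subset_ker
    ((IsCyclic.mulAutMulEquiv K).toMonoidHom.comp (MulAut.conjNormal (H := K))) hc
  have hconj : MulAut.conjNormal (H := K) c = 1 :=
    (IsCyclic.mulAutMulEquiv K).injective (hker.trans (map_one _).symm)
  refine mem_centralizer_iff.mpr fun k hk => eq_mul_inv_iff_mul_eq.mp ?_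
  rw [← MulAut.conjNormal_apply c (⟨k, hk⟩ : K), hconj, MulAut.one_apply]

theorem derivedSeries_two_eq_bot_of_isCyclic_commutator_quotient {K : Subgroup G} [K.Normal]
    (hK : commutator G ≤ centralizer K) (hc : IsCyclic (commutator (G ⧸ K))) :
    derivedSeries G 2 = ⊥ := by
  have hmap : ∀ x : commutator G, QuotientGroup.mk' K x ∈ commutator (G ⧸ K) := by
    intro x
    rw [commutator_def, ← map_top_of_surjective _ (QuotientGroup.mk'_surjective K),
      ← map_commutator]
    exact mem_map_of_mem _ x.2
  let f : commutator G →* commutator (G ⧸ K) :=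
    ((QuotientGroup.mk' K).comp (commutator G).subtype).codRestrict _ hmap
  have hf : f.ker ≤ center (commutator G) := fun x hx => by
    have hxK : (x : G) ∈ K :=
      (QuotientGroup.eq_one_iff _).mp (congrArg Subtype.val (MonoidHom.mem_ker.mp hx))
    exact mem_center_iff.mpr fun y => Subtype.ext (mem_centralizer_iff.mp (hK y.2) x hxK).symm
  have := f.isMulCommutative_of_isCyclic_of_ker_le_center hf
  exact derivedSeries_two_eq_bot_of_commutator_le le_rfl

theorem isMulCommutative_of_card_dvd_prime_sq {p : ℕ} [Fact p.Prime] (h : Nat.card G ∣ p ^ 2) :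
    IsMulCommutative G := by
  obtain ⟨k, hk, hcard⟩ := (Nat.dvd_prime_pow Fact.out).mp h
  obtain rfl | hk := hk.eq_or_lt
  · exact IsPGroup.isMulCommutative_of_card_eq_prime_sq hcard
  · have : IsCyclic G := isCyclic_of_card_dvd_prime (p := p)
      (hcard ▸ pow_dvd_pow p (Nat.le_of_lt_succ hk) |>.trans (pow_one p).dvd)
    infer_instance

theorem isCyclic_commutator_of_card_dvd_prime_cube {p : ℕ} [Fact p.Prime]
    (h : Nat.card G ∣ p ^ 3) : IsCyclic (commutator G) := by
  have : Finite G := Nat.finite_of_card_ne_zero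
    (ne_zero_of_dvd_ne_zero (pow_ne_zero 3 (Fact.out : p.Prime).ne_zero) h)
  cases subsingleton_or_nontrivial G
  · infer_instance
  have hp : IsPGroup p G := IsPGroup.of_card_dvd_pow h
  have := hp.center_nontrivial
  obtain ⟨z, hz⟩ := exists_prime_orderOf_dvd_card' p
    ((hp.to_subgroup (center G)).card_eq_or_dvd.resolve_left Finite.one_lt_card.ne')
  have hzc : zpowers (z : G) ≤ center G := zpowers_le.mpr z.2
  have : (zpowers (z : G)).Normal := ⟨fun y hy g => by
    rwa [mem_center_iff.mp (hzc hy) g, mul_inv_cancel_right]⟩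
  have hcard : Nat.card (G ⧸ zpowers (z : G)) ∣ p ^ 2 := by
    rw [← card_mul_index (zpowers (z : G)), Nat.card_zpowers, orderOf_coe, hz, pow_succ' p 2] at h
    exact index_eq_card (zpowers (z : G)) ▸ Nat.dvd_of_mul_dvd_mul_left (Fact.out : p.Prime).pos h
  exact isCyclic_of_le (Normal.quotient_commutative_iff_commutator_le.mp
    (isMulCommutative_of_card_dvd_prime_sq hcard))

theorem index_normalCore_dvd_factorial (A : Subgroup G) [A.FiniteIndex] :
    A.normalCore.index ∣ A.index.factorial := by
  rw [normalCore_eq_ker, index_ker, index_eq_card, ← Nat.card_perm]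
  exact card_subgroup_dvd_card (MulAction.toPermHom G (G ⧸ A)).range

section MaximalCommutative

variable {A : Subgroup G}

theorem isCoatom_of_index_prime (h : A.index.Prime) : IsCoatom A := by
  refine ⟨fun hA => h.ne_one (index_eq_one.mpr hA), fun M hM => ?_⟩
  refine (h.eq_one_or_self_of_dvd _ (index_dvd_of_le hM.le)).elim index_eq_one.mp fun hidx => ?_
  have hmul := relIndex_mul_index hM.le
  rw [hidx, Nat.mul_eq_right h.ne_zero, relIndex_eq_one] at hmul
  exact absurd hmul hM.not_ge

theorem normalizer_eq_self_of_isCoatom (hA : IsCoatom A) (hn : ¬ A.Normal) :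
    normalizer (A : Set G) = A :=
  (hA.le_iff.mp le_normalizer).resolve_left (mt normalizer_eq_top_iff.mp hn)

theorem center_le_of_isCoatom (hA : IsCoatom A) (hn : ¬ A.Normal) : center G ≤ A :=
  (center_le_normalizer _).trans (normalizer_eq_self_of_isCoatom hA hn).le

theorem commutator_le_of_isCoatom_of_normal [A.Normal] (hA : IsCoatom A) : commutator G ≤ A := by
  obtain ⟨g, -, hg⟩ := SetLike.exists_of_lt hA.lt_top
  have hsup : A ⊔ zpowers g = ⊤ :=
    hA.2 _ (left_lt_sup.mpr fun h => hg (h (mem_zpowers g)))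
  exact Normal.commutator_le_of_self_sup_commutative_eq_top hsup inferInstance

variable [IsMulCommutative A]

theorem le_center_of_normal_of_le_isCoatom {Q : Subgroup G} [Q.Normal] (hA : IsCoatom A)
    (hn : ¬ A.Normal) (hQ : Q ≤ A) : Q ≤ center G := by
  have hAQ : A ≤ centralizer Q := (le_centralizer A).trans (centralizer_le hQ)
  rcases hA.le_iff.mp hAQ with h | h
  · exact centralizer_eq_top_iff_subset.mp h
  · exact absurd (h ▸ normal_centralizer) hn

theorem normalCore_eq_center_of_isCoatom (hA : IsCoatom A) (hn : ¬ A.Normal) :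
    A.normalCore = center G :=
  le_antisymm (le_center_of_normal_of_le_isCoatom hA hn A.normalCore_le)
    (normal_le_normalCore.mpr (center_le_of_isCoatom hA hn))

-- A Sylow subgroup of `A` lies in the center or has normalizer `A`; in the second case it would
-- grow inside its normalizer if its prime divided the index of `A`.
theorem relIndex_center_coprime_index [Finite G] (hA : IsCoatom A) (hn : ¬ A.Normal) :
    ((center G).relIndex A).Coprime A.index := by
  refine Nat.coprime_of_dvd fun q hq hqZ hqA => ?_
  have : Fact q.Prime := ⟨hq⟩
  obtain ⟨Q⟩ : Nonempty (Sylow q A) := inferInstance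
  set R : Subgroup G := (Q : Subgroup A).map A.subtype
  have hRA : R ≤ A := map_subtype_le _
  have hRQ : R.subgroupOf A = Q := comap_map_eq_self_of_injective A.subtype_injective _
  have hRZ : ¬ R ≤ center G := fun h => Q.not_dvd_index <|
    hqZ.trans (index_dvd_of_le (hRQ ▸ subgroupOf_mono A h))
  have hnorm : normalizer (R : Set G) = A :=
    (hA.le_iff.mp (le_normalizer_of_normal_subgroupOf hRA)).resolve_left fun h =>
      have := normalizer_eq_top_iff.mp h
      hRZ (le_center_of_normal_of_le_isCoatom hA hn hRA)
  obtain ⟨k, hk⟩ := IsPGroup.iff_card.mp (Q.2.map A.subtype)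
  have hdvd : q ^ (k + 1) ∣ Nat.card G := by
    rw [← card_mul_index R, hk, pow_succ, ← relIndex_mul_index hRA]
    exact mul_dvd_mul_left _ (hqA.mul_left _)
  have hgrow : q ∣ R.relIndex (normalizer (R : Set G)) :=
    (Sylow.prime_dvd_card_quotient_normalizer hdvd hk).trans (index_eq_card _).symm.dvd
  rw [hnorm, relIndex, hRQ] at hgrow
  exact Q.not_dvd_index hgrow

end MaximalCommutative

theorem exists_sylow_le_of_not_dvd_index [Finite G] {p : ℕ} [Fact p.Prime] {A : Subgroup G}
    (h : ¬ p ∣ A.index) : ∃ P : Sylow p G, (P : Subgroup G) ≤ A := by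
  obtain ⟨Q⟩ : Nonempty (Sylow p A) := inferInstance
  have hQ : ¬ p ∣ ((Q : Subgroup A).map A.subtype).index := by
    rw [index_map_subtype, (Fact.out : p.Prime).dvd_mul]
    exact not_or.mpr ⟨Q.not_dvd_index, h⟩
  exact ⟨(Q.2.map A.subtype).toSylow hQ, map_subtype_le _⟩

theorem isZGroup_of_isCyclic_of_squarefree_index [Finite G] {C : Subgroup G} [IsCyclic C]
    (hco : (Nat.card C).Coprime C.index) (hsq : Squarefree C.index) : IsZGroup G := by
  refine ⟨fun p hp P => ?_⟩
  have : Fact p.Prime := ⟨hp⟩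
  by_cases hpC : p ∣ C.index
  · obtain ⟨k, hk⟩ := IsPGroup.iff_card.mp P.2
    have hcop : (p ^ k).Coprime (Nat.card C) :=
      (hco.coprime_dvd_right hpC).symm.pow_left k
    have hdvd : p ^ k ∣ C.index :=
      hcop.dvd_of_dvd_mul_left (hk ▸ card_mul_index C ▸ card_subgroup_dvd_card _)
    exact isCyclic_of_card_dvd_prime (hk ▸ hsq.pow_dvd_of_pow_dvd hdvd)
  · obtain ⟨Q, hQ⟩ := exists_sylow_le_of_not_dvd_index hpC
    have : IsCyclic Q := isCyclic_of_le hQ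
    exact (Q.equiv P).isCyclic.mp inferInstance

theorem derivedSeries_two_eq_bot_of_normalizer_le_centralizer {p q : ℕ}
    [Fact p.Prime] [Fact q.Prime] (P : Sylow p G) [Finite (Sylow p G)]
    (hP : normalizer (P : Set G) ≤ centralizer P)
    (h : (P : Subgroup G).index ∣ q ^ 2) : derivedSeries G 2 = ⊥ := by
  have : (P : Subgroup G).FiniteIndex :=
    ⟨ne_zero_of_dvd_ne_zero (pow_ne_zero 2 (Fact.out : q.Prime).ne_zero) h⟩
  have hcompl := MonoidHom.ker_transferSylow_isComplement' P hP
  have hker : IsMulCommutative (MonoidHom.transferSylow P hP).ker :=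
    isMulCommutative_of_card_dvd_prime_sq (hcompl.index_eq_card ▸ h)
  have : IsMulCommutative P := le_centralizer_iff_isMulCommutative.mp (le_normalizer.trans hP)
  exact derivedSeries_two_eq_bot_of_commutator_le <|
    Normal.commutator_le_of_self_sup_commutative_eq_top hcompl.sup_eq_top this

theorem card_map_mk' (N A : Subgroup G) [N.Normal] :
    Nat.card (A.map (QuotientGroup.mk' N)) = N.relIndex A := by
  rw [← relIndex_ker, QuotientGroup.ker_mk']

theorem index_map_mk' {N A : Subgroup G} [N.Normal] (h : N ≤ A) :
    (A.map (QuotientGroup.mk' N)).index = A.index :=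
  index_map_eq A (QuotientGroup.mk'_surjective N) ((QuotientGroup.ker_mk' N).trans_le h)

theorem normalizer_map_mk' {N A : Subgroup G} [N.Normal] (h : N ≤ A) :
    normalizer (A.map (QuotientGroup.mk' N) : Set (G ⧸ N)) =
      (normalizer (A : Set G)).map (QuotientGroup.mk' N) := by
  have hsurj := QuotientGroup.mk'_surjective N
  rw [← map_comap_eq_self_of_surjective hsurj (normalizer _),
    comap_normalizer_eq_of_surjective _ hsurj,
    comap_map_eq_self ((QuotientGroup.ker_mk' N).trans_le h)]

theorem derivedSeries_two_le_center_of_squarefree_index [Finite G] {A : Subgroup G} [IsCyclic A]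
    (hA : IsCoatom A) (hsq : Squarefree A.index) : derivedSeries G 2 ≤ center G := by
  by_cases hn : A.Normal
  · exact (derivedSeries_two_eq_bot_of_commutator_le
      (commutator_le_of_isCoatom_of_normal hA)).le.trans bot_le
  have hco := relIndex_center_coprime_index hA hn
  set C := A.map (QuotientGroup.mk' (center G))
  rw [← card_map_mk', ← index_map_mk' (center_le_of_isCoatom hA hn)] at hco
  rw [← index_map_mk' (center_le_of_isCoatom hA hn)] at hsq
  have : IsCyclic C := isCyclic_of_surjective _ ((QuotientGroup.mk' _).subgroupMap_surjective A)
  have : IsZGroup (G ⧸ center G) := isZGroup_of_isCyclic_of_squarefree_index hco hsq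
  have := IsZGroup.isCyclic_commutator (G ⧸ center G)
  exact derivedSeries_two_le_of_quotient (derivedSeries_two_eq_bot_of_commutator_le le_rfl)

theorem derivedSeries_two_le_center_of_isCoatom_of_index_eq_four [Finite G] {A : Subgroup G}
    [IsMulCommutative A] (hA : IsCoatom A) (h4 : A.index = 4) : derivedSeries G 2 ≤ center G := by
  by_cases hn : A.Normal
  · exact (derivedSeries_two_eq_bot_of_commutator_le
      (commutator_le_of_isCoatom_of_normal hA)).le.trans bot_le
  have hZA := center_le_of_isCoatom hA hn
  have hZ1 : (center G).relIndex A ≠ 1 := fun h =>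
    hn (le_antisymm hZA (relIndex_eq_one.mp h) ▸ inferInstance)
  have hZ6 : (center G).relIndex A ∣ 6 := by
    have h := index_normalCore_dvd_factorial A
    rw [normalCore_eq_center_of_isCoatom hA hn, ← relIndex_mul_index hZA, h4] at h
    exact Nat.dvd_of_mul_dvd_mul_right four_pos h
  have hZ2 : ((center G).relIndex A).Coprime 2 :=
    (h4 ▸ relIndex_center_coprime_index hA hn).coprime_dvd_right (by norm_num)
  have hZ3 : (center G).relIndex A = 3 :=
    ((Nat.dvd_prime Nat.prime_three).mp (hZ2.dvd_of_dvd_mul_left hZ6)).resolve_left hZ1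
  set C := A.map (QuotientGroup.mk' (center G)) with hC
  have hCidx : C.index = 2 ^ 2 := (index_map_mk' hZA).trans h4
  have : Fact (Nat.Prime 3) := ⟨Nat.prime_three⟩
  have hC3 : IsPGroup 3 C := IsPGroup.of_card (n := 1) ((card_map_mk' _ A).trans hZ3)
  let P : Sylow 3 (G ⧸ center G) := hC3.toSylow (by rw [hCidx]; norm_num)
  have hP : normalizer (P : Set (G ⧸ center G)) ≤ centralizer P := by
    have : normalizer (C : Set (G ⧸ center G)) = C := by
      rw [hC, normalizer_map_mk' hZA, normalizer_eq_self_of_isCoatom hA hn]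
    exact this.trans_le (le_centralizer C)
  exact derivedSeries_two_le_of_quotient
    (derivedSeries_two_eq_bot_of_normalizer_le_centralizer (q := 2) P hP hCidx.dvd)

theorem relIndex_dvd_of_forall_pow_mem {K A : Subgroup G} [IsCyclic A] {n : ℕ}
    (h : ∀ a ∈ A, a ^ n ∈ K) : K.relIndex A ∣ n := by
  have : IsCyclic (A ⧸ K.subgroupOf A) :=
    isCyclic_of_surjective _ (QuotientGroup.mk'_surjective (K.subgroupOf A))
  rw [relIndex, index_eq_card, ← IsCyclic.exponent_eq_card]
  refine Monoid.exponent_dvd_of_forall_pow_eq_one fun q => ?_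
  obtain ⟨a, rfl⟩ := QuotientGroup.mk_surjective q
  rw [← QuotientGroup.mk_pow, QuotientGroup.eq_one_iff]
  exact h a a.2

-- The squares of elements of `A` generate a normal subgroup contained in `A`, of index dividing 8.
theorem derivedSeries_two_eq_bot_of_index_two_of_index_two {A M : Subgroup G} [IsCyclic A]
    (hAM : A ≤ M) (hA : A.relIndex M = 2) (hM : M.index = 2) : derivedSeries G 2 = ⊥ := by
  have := normal_of_index_eq_two hM
  set K := normalClosure ((· ^ 2) '' (A : Set G))
  have hKA : K ≤ A := by
    refine (closure_le A).mpr fun z hz => ?_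
    obtain ⟨_, ⟨a, ha, rfl⟩, hconj⟩ := Group.mem_conjugatesOfSet_iff.mp hz
    obtain ⟨g, rfl⟩ := isConj_iff.mp hconj
    rw [← conj_pow]
    exact sq_mem_of_index_two hA ⟨_, this.conj_mem a (hAM ha) g⟩
  have : IsCyclic K := isCyclic_of_le hKA
  have hK : K.relIndex A ∣ 2 := relIndex_dvd_of_forall_pow_mem fun a ha =>
    subset_normalClosure (Set.mem_image_of_mem _ ha)
  have hcard : Nat.card (G ⧸ K) ∣ 2 ^ 3 := by
    rw [← index_eq_card, ← relIndex_mul_index hKA, ← relIndex_mul_index hAM, hA, hM]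
    exact mul_dvd_mul_right hK 4
  exact derivedSeries_two_eq_bot_of_isCyclic_commutator_quotient
    (commutator_le_centralizer_of_isCyclic K) (isCyclic_commutator_of_card_dvd_prime_cube hcard)

theorem derivedSeries_two_le_center_of_index_eq_four [Finite G] {A : Subgroup G} [IsCyclic A]
    (h : A.index = 4) : derivedSeries G 2 ≤ center G := by
  by_cases hA : IsCoatom A
  · exact derivedSeries_two_le_center_of_isCoatom_of_index_eq_four hA h
  have htop : A ≠ ⊤ := fun htop => by simp [htop] at h
  obtain ⟨M, hAM, hM⟩ := exists_lt_lt_of_not_covBy htop.lt_top (mt covBy_top_iff.mp hA)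
  have hmul : A.relIndex M * M.index = 2 ^ 2 := (relIndex_mul_index hAM.le).trans h
  obtain ⟨hrel, hidx⟩ := (Nat.prime_two.mul_eq_prime_sq_iff
    (mt relIndex_eq_one.mp hAM.not_ge) (mt index_eq_one.mp hM.ne)).mp hmul
  exact (derivedSeries_two_eq_bot_of_index_two_of_index_two hAM.le hrel hidx).le.trans bot_le

theorem derivedSeries_two_le_center_of_index_le_five [Finite G] {A : Subgroup G} [IsCyclic A]
    (h : A.index ≤ 5) : derivedSeries G 2 ≤ center G := by
  have hpos : 0 < A.index := Nat.pos_of_ne_zero index_ne_zero_of_finite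
  obtain h1 | hp | h4 : A.index = 1 ∨ A.index.Prime ∨ A.index = 4 := by
    interval_cases A.index <;> norm_num
  · have hA : commutator G ≤ A := le_top.trans_eq (index_eq_one.mp h1).symm
    exact (derivedSeries_two_eq_bot_of_commutator_le hA).le.trans bot_le
  · exact derivedSeries_two_le_center_of_squarefree_index (isCoatom_of_index_prime hp)
      hp.prime.squarefree
  · exact derivedSeries_two_le_center_of_index_eq_four h4

section Sylow

variable [Finite G] {p : ℕ} [Fact p.Prime]

theorem le_normalizer_of_relIndex_lt (P : Sylow p G) {H K : Subgroup G}
    (hPH : (P : Subgroup G) ≤ H) (hHP : H ≤ normalizer (P : Set G)) (hHK : H ≤ K)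
    (hlt : H.relIndex K < p) : K ≤ normalizer (P : Set G) := by
  have hPK := hPH.trans hHK
  have hdvd : Nat.card (Sylow p K) ∣ H.relIndex K := by
    rw [(P.subtype hPK).card_eq_index_normalizer]
    exact index_dvd_of_le
      ((subgroupOf_mono K hHP).trans_eq (subgroupOf_normalizer_eq hPK))
  have hle : Nat.card (Sylow p K) ≤ H.relIndex K :=
    Nat.le_of_dvd (Nat.pos_of_ne_zero index_ne_zero_of_finite) hdvd
  have hone : Nat.card (Sylow p K) = 1 :=
    (card_sylow_modEq_one p K).eq_of_lt_of_lt (hle.trans_lt hlt) (Fact.out : p.Prime).one_lt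
  have : Subsingleton (Sylow p K) := (Nat.card_eq_one_iff_unique.mp hone).1
  exact (normal_subgroupOf_iff_le_normalizer hPK).mp (P.subtype hPK).normal_of_subsingleton

theorem exists_normal_sylow_of_relIndex_lt {A M : Subgroup G} [IsMulCommutative A] (hAM : A ≤ M)
    (hA : A.relIndex M < p) (hM : M.index < p) :
    ∃ P : Sylow p G, (P : Subgroup G) ≤ A ∧ (P : Subgroup G).Normal := by
  have hp : p.Prime := Fact.out
  have hndvd : ¬ p ∣ A.index := by
    rw [← relIndex_mul_index hAM, hp.dvd_mul]
    exact not_or.mpr ⟨Nat.not_dvd_of_pos_of_lt (Nat.pos_of_ne_zero index_ne_zero_of_finite) hA,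
      Nat.not_dvd_of_pos_of_lt (Nat.pos_of_ne_zero index_ne_zero_of_finite) hM⟩
  obtain ⟨P, hPA⟩ := exists_sylow_le_of_not_dvd_index hndvd
  have hMP : M ≤ normalizer (P : Set G) :=
    le_normalizer_of_relIndex_lt P hPA (le_normalizer_of_normal_subgroupOf hPA) hAM hA
  exact ⟨P, hPA, normalizer_eq_top_iff.mp <| top_le_iff.mp <|
    le_normalizer_of_relIndex_lt P (hPA.trans hAM) hMP le_top (M.relIndex_top_right.trans_lt hM)⟩

theorem isCoatom_or_exists_normal_sylow_of_index_lt {A : Subgroup G} [IsMulCommutative A]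
    (h : A.index < 2 * p) :
    IsCoatom A ∨ ∃ P : Sylow p G, (P : Subgroup G) ≤ A ∧ (P : Subgroup G).Normal := by
  have hp : 1 < p := (Fact.out : p.Prime).one_lt
  refine or_iff_not_imp_left.mpr fun hA => ?_
  rcases eq_or_ne A ⊤ with rfl | htop
  · exact exists_normal_sylow_of_relIndex_lt le_rfl (by simpa using hp) (by simpa using hp)
  obtain ⟨M, hAM, hM⟩ := exists_lt_lt_of_not_covBy htop.lt_top (mt covBy_top_iff.mp hA)
  have hrel : 2 ≤ A.relIndex M := (Nat.two_le_iff _).mpr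
    ⟨index_ne_zero_of_finite, mt relIndex_eq_one.mp hAM.not_ge⟩
  have hidx : 2 ≤ M.index := (Nat.two_le_iff _).mpr
    ⟨index_ne_zero_of_finite, mt index_eq_one.mp hM.ne⟩
  rw [← relIndex_mul_index hAM.le] at h
  exact exists_normal_sylow_of_relIndex_lt hAM.le (by nlinarith) (by nlinarith)

theorem derivedSeries_two_le_center_or_exists_normal_sylow {A : Subgroup G} [IsCyclic A]
    (h : A.index < 2 * p) (hsq : p ≤ A.index → Squarefree A.index) :
    derivedSeries G 2 ≤ center G ∨
      ∃ P : Sylow p G, IsCyclic P ∧ (P : Subgroup G).Normal := by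
  have hcyc : (∃ P : Sylow p G, (P : Subgroup G) ≤ A ∧ (P : Subgroup G).Normal) →
      ∃ P : Sylow p G, IsCyclic P ∧ (P : Subgroup G).Normal :=
    fun ⟨P, hPA, hP⟩ => ⟨P, isCyclic_of_le hPA, hP⟩
  rcases lt_or_ge A.index p with hlt | hge
  · exact .inr <| hcyc <| exists_normal_sylow_of_relIndex_lt le_top
      (A.relIndex_top_right.trans_lt hlt) (index_top.trans_lt (Fact.out : p.Prime).one_lt)
  · exact (isCoatom_or_exists_normal_sylow_of_index_lt h).imp
      (fun hA => derivedSeries_two_le_center_of_squarefree_index hA (hsq hge)) hcyc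

-- `G'` centralizes `P`, so by Burnside's transfer theorem `P` is a direct factor of its
-- centralizer `C`, whose commutator subgroup contains `G''`.
theorem disjoint_sylow_derivedSeries_two (P : Sylow p G) [(P : Subgroup G).Normal] [IsCyclic P] :
    Disjoint (P : Subgroup G) (derivedSeries G 2) := by
  set C := centralizer (P : Set G)
  have hPC : (P : Subgroup G) ≤ C := le_centralizer (P : Subgroup G)
  have hGC : commutator G ≤ C := commutator_le_centralizer_of_isCyclic (P : Subgroup G)
  set Q : Sylow p C := P.subtype hPC
  have hQ : normalizer (Q : Set C) ≤ centralizer Q := fun c _ =>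
    mem_centralizer_iff.mpr fun y hy => Subtype.ext (mem_centralizer_iff.mp c.2 y hy)
  have hcompl := MonoidHom.ker_transferSylow_isComplement' Q hQ
  have hker : commutator C ≤ (MonoidHom.transferSylow Q hQ).ker :=
    Normal.commutator_le_of_self_sup_commutative_eq_top hcompl.sup_eq_top
      (inferInstanceAs (IsMulCommutative ((P : Subgroup G).subgroupOf C)))
  have hmap : derivedSeries G 2 ≤ (commutator C).map C.subtype := by
    rw [derivedSeries_succ, derivedSeries_one, map_subtype_commutator]
    exact commutator_mono hGC hGC
  refine disjoint_def.mpr fun {x} hxP hx => ?_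
  obtain ⟨y, hy, rfl⟩ := hmap hx
  have hyQ : y ∈ (Q : Subgroup C) := hxP
  exact congrArg Subtype.val (disjoint_def.mp hcompl.disjoint (hker hy) hyQ)

open scoped commutatorElement in
theorem derivedSeries_two_le_center_of_quotient_sylow (P : Sylow p G)
    [(P : Subgroup G).Normal] [IsCyclic P]
    (h : derivedSeries (G ⧸ (P : Subgroup G)) 2 ≤ center _) : derivedSeries G 2 ≤ center G := by
  rw [← map_derivedSeries_eq (QuotientGroup.mk'_surjective (P : Subgroup G))] at h
  refine fun x hx => mem_center_iff.mpr fun g => commutatorElement_eq_one_iff_mul_comm.mp ?_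
  have hgP : ⁅g, x⁆ ∈ (P : Subgroup G) := by
    rw [← QuotientGroup.ker_mk' (P : Subgroup G), MonoidHom.mem_ker, map_commutatorElement,
      commutatorElement_eq_one_iff_mul_comm]
    exact mem_center_iff.mp (h (mem_map_of_mem _ hx)) _
  have hgG : ⁅g, x⁆ ∈ derivedSeries G 2 :=
    mul_mem ((derivedSeries_normal G 2).conj_mem x hx g) (inv_mem hx)
  exact disjoint_def.mp (disjoint_sylow_derivedSeries_two P) hgP hgG

theorem index_sylow_mem_smoothNumbers (P : Sylow p G)
    (hG : Nat.card G ∈ Nat.smoothNumbers (p + 1)) :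
    (P : Subgroup G).index ∈ Nat.smoothNumbers p := by
  refine Nat.mem_smoothNumbers'.mpr fun q hq hqi => ?_
  refine (Nat.le_of_lt_succ (Nat.mem_smoothNumbers'.mp hG q hq
    (hqi.trans (P : Subgroup G).index_dvd_card))).lt_of_ne ?_
  rintro rfl
  exact P.not_dvd_index hqi

end Sylow

end GroupTheory

section ElementOrders

open Subgroup

variable {G : Type*} [Group G]

theorem exists_mk_eq_pow_orderOf_eq_one (N : Subgroup G) [N.Normal]
    (h : (Nat.card N).Coprime N.index) (q : G ⧸ N) :
    ∃ g : G, (g : G ⧸ N) = q ∧ g ^ orderOf q = 1 := by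
  obtain ⟨g, rfl⟩ := QuotientGroup.mk_surjective q
  set m := orderOf (g : G ⧸ N)
  have hco : m.Coprime (Nat.card N) :=
    Nat.Coprime.coprime_dvd_left (N.index_eq_card ▸ orderOf_dvd_natCard _) h.symm
  have hgN : g ^ m ∈ N := by
    rw [← QuotientGroup.eq_one_iff, QuotientGroup.mk_pow, pow_orderOf_eq_one]
  have hgm : (g ^ m) ^ Nat.card N = 1 :=
    congrArg Subtype.val (pow_card_eq_one' (x := (⟨_, hgN⟩ : N)))
  obtain ⟨k, hkm, hkN⟩ := Nat.chineseRemainder hco 1 0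
  refine ⟨g ^ k, ?_, ?_⟩
  · rw [QuotientGroup.mk_pow, pow_eq_pow_iff_modEq.mpr hkm, pow_one]
  · obtain ⟨c, rfl⟩ := (Nat.modEq_zero_iff_dvd).mp hkN
    rw [← pow_mul, mul_comm, ← mul_assoc, pow_mul, pow_mul, hgm, one_pow]

theorem orderOf_mul_le_of_isCyclic [Finite G] {N : Subgroup G} [N.Normal] [IsCyclic N]
    {g u : G} (hu : u ∈ N) {m : ℕ} (hm : 0 < m) (hg : g ^ m = 1) :
    orderOf (g * u) ≤ m * orderOf u := by
  have := normal_of_le_of_isCyclic (zpowers_le.mpr hu)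
  have hgu : (g * u) ^ m ∈ zpowers u := by
    rw [← QuotientGroup.eq_one_iff, QuotientGroup.mk_pow, QuotientGroup.mk_mul,
      (QuotientGroup.eq_one_iff u).mpr (mem_zpowers u), mul_one, ← QuotientGroup.mk_pow, hg,
      QuotientGroup.mk_one]
  refine orderOf_le_of_pow_eq_one (Nat.mul_pos hm (orderOf_pos u)) ?_
  rw [pow_mul]
  exact orderOf_dvd_iff_pow_eq_one.mp (orderOf_dvd_of_mem_zpowers hgu)

theorem psi_le_mul_psi_quotient [Fintype G] (N : Subgroup G) [N.Normal] [IsCyclic N]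
    (h : (Nat.card N).Coprime N.index) [Fintype N] [Fintype (G ⧸ N)] :
    psi G ≤ psi N * psi (G ⧸ N) := by
  choose r hr hrpow using exists_mk_eq_pow_orderOf_eq_one N h
  have hbij : Function.Bijective fun x : (G ⧸ N) × N => r x.1 * (x.2 : G) := by
    constructor
    · rintro ⟨q, u⟩ ⟨q', u'⟩ huv
      obtain rfl : q = q' := by simpa [hr] using congrArg (QuotientGroup.mk (s := N)) huv
      simpa using huv
    · intro x
      refine ⟨⟨x, ⟨(r x)⁻¹ * x, ?_⟩⟩, by simp⟩
      rw [← QuotientGroup.eq, hr]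
  rw [psi, psi, psi, mul_comm, Fintype.sum_mul_sum, ← Fintype.sum_prod_type',
    ← Fintype.sum_bijective _ hbij _ _ fun _ => rfl]
  refine Finset.sum_le_sum fun x _ => ?_
  rw [← orderOf_coe x.2]
  exact orderOf_mul_le_of_isCyclic x.2.2 (orderOf_pos _) (hrpow _)

theorem psi_le_of_card_eq_prime_pow [Fintype G] [IsCyclic G] {p r : ℕ} (hp : p.Prime)
    (h : Nat.card G = p ^ (r + 1)) :
    psi G ≤ p ^ (r + 1) * (p ^ (r + 1)).totient + p ^ r * p ^ r := by
  classical
  have hcard : Fintype.card G = p ^ (r + 1) := by rw [← Nat.card_eq_fintype_card, h]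
  have hgen : (Finset.univ.filter fun a : G => orderOf a = p ^ (r + 1)).card
      = (p ^ (r + 1)).totient :=
    IsCyclic.card_orderOf_eq_totient (by rw [hcard])
  have hnongen : (Finset.univ.filter fun a : G => ¬ orderOf a = p ^ (r + 1)).card = p ^ r := by
    have htot : (p ^ (r + 1)).totient + p ^ r = p ^ (r + 1) := by
      rw [Nat.totient_prime_pow_succ hp, ← Nat.mul_succ, Nat.succ_eq_add_one,
        Nat.sub_add_cancel hp.one_le, pow_succ]
    have hsum := Finset.card_filter_add_card_filter_not (s := Finset.univ)
      fun a : G => orderOf a = p ^ (r + 1)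
    rw [hgen, Finset.card_univ, hcard] at hsum
    lia
  rw [psi, ← Finset.sum_filter_add_sum_filter_not _ fun a : G => orderOf a = p ^ (r + 1)]
  refine add_le_add ?_ ?_
  · rw [Finset.sum_congr rfl fun a ha => (Finset.mem_filter.mp ha).2, Finset.sum_const, hgen,
      smul_eq_mul, mul_comm]
  · rw [← smul_eq_mul (p ^ r)]
    nth_rw 1 [← hnongen]
    refine Finset.sum_le_card_nsmul _ _ _ fun a ha => ?_
    obtain ⟨k, hk, hka⟩ := (Nat.dvd_prime_pow hp).mp (h ▸ orderOf_dvd_natCard a)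
    have hne : k ≠ r + 1 := by
      rintro rfl
      exact (Finset.mem_filter.mp ha).2 hka
    rw [hka]
    exact Nat.pow_le_pow_right hp.pos (Nat.le_of_lt_succ (hk.lt_of_ne hne))

/-- The sum of element orders of `G` relative to `n * φ n`, where `n` is the order of `G`: the
contribution to that sum of the generators of a cyclic group of order `n`. -/
noncomputable def psiRatio (G : Type*) [Group G] [Fintype G] : ℚ :=
  psi G / (Nat.card G * (Nat.card G).totient)

theorem psiRatio_nonneg [Fintype G] : 0 ≤ psiRatio G := by
  unfold psiRatio
  positivity

theorem psiRatio_le_mul_psiRatio_quotient [Fintype G] (N : Subgroup G) [N.Normal] [IsCyclic N]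
    (h : (Nat.card N).Coprime N.index) [Fintype N] [Fintype (G ⧸ N)] :
    psiRatio G ≤ psiRatio N * psiRatio (G ⧸ N) := by
  have hpsi : (psi G : ℚ) ≤ psi N * psi (G ⧸ N) := by
    exact_mod_cast psi_le_mul_psi_quotient N h
  rw [psiRatio, psiRatio, psiRatio, div_mul_div_comm, ← N.card_mul_index, Nat.totient_mul h,
    N.index_eq_card]
  push_cast
  rw [mul_mul_mul_comm]
  gcongr

theorem psiRatio_le_of_isPGroup [Fintype G] [IsCyclic G] {p : ℕ} [Fact p.Prime]
    (hG : IsPGroup p G) : psiRatio G ≤ 1 + 1 / (p * (p - 1)) := by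
  have hp : p.Prime := Fact.out
  have hp1 : (0 : ℚ) < p - 1 := sub_pos.mpr (by exact_mod_cast hp.one_lt)
  have hp0 : (0 : ℚ) < p := by exact_mod_cast hp.pos
  rw [psiRatio]
  obtain ⟨_ | r, hcard⟩ := hG.exists_card_eq
  · have : Subsingleton G := (Nat.card_eq_one_iff_unique.mp hcard).1
    have hpsi : psi G = 1 := by
      simp [psi, Subsingleton.elim _ (1 : G), ← Nat.card_eq_fintype_card]
    rw [hpsi, hcard]
    simpa using div_nonneg zero_le_one (mul_pos hp0 hp1).le
  · have hpsi : (psi G : ℚ) ≤ p ^ (r + 1) * (p ^ (r + 1)).totient + p ^ r * p ^ r := by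
      exact_mod_cast psi_le_of_card_eq_prime_pow hp hcard
    rw [hcard, Nat.totient_prime_pow_succ hp]
    rw [Nat.totient_prime_pow_succ hp] at hpsi
    push_cast [hp.one_le] at hpsi ⊢
    rw [div_le_iff₀ (by positivity)]
    refine hpsi.trans_eq ?_
    field_simp
    ring

end ElementOrders

section MertensProduct

open Subgroup

/-- The product of `1 - 1 / q` over the primes `q ≤ M`; it is at most `φ n / n` when `n` has no
prime factor above `M`. -/
def mertensProduct (M : ℕ) : ℚ := ∏ q ∈ (M + 1).primesBelow, (1 - (q : ℚ)⁻¹)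

theorem mertensProduct_zero : mertensProduct 0 = 1 := by
  simp [mertensProduct, Nat.primesBelow, Finset.filter_singleton, Nat.not_prime_zero]

theorem mertensProduct_succ (M : ℕ) : mertensProduct (M + 1) =
    if (M + 1).Prime then mertensProduct M * (1 - ((M + 1 : ℕ) : ℚ)⁻¹) else mertensProduct M := by
  rw [mertensProduct, Nat.primesBelow_succ]
  split_ifs
  · rw [Finset.prod_insert (Nat.notMem_primesBelow _), mul_comm, mertensProduct]
  · rfl

theorem one_sub_inv_natCast_nonneg (q : ℕ) : 0 ≤ 1 - (q : ℚ)⁻¹ :=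
  sub_nonneg.mpr (Nat.cast_inv_le_one q)

theorem mertensProduct_nonneg (M : ℕ) : 0 ≤ mertensProduct M :=
  Finset.prod_nonneg fun q _ => one_sub_inv_natCast_nonneg q

theorem monotone_mul_mertensProduct : Monotone fun M : ℕ => M * mertensProduct M := by
  refine monotone_nat_of_le_succ fun M => ?_
  rw [mertensProduct_succ]
  split_ifs
  · refine le_of_eq ?_
    push_cast
    field_simp
    ring
  · exact mul_le_mul_of_nonneg_right (by exact_mod_cast M.le_succ) (mertensProduct_nonneg M)

theorem mul_mertensProduct_le_totient {n M : ℕ} (h : n ∈ Nat.smoothNumbers (M + 1)) :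
    n * mertensProduct M ≤ n.totient := by
  rw [Nat.totient_eq_mul_prod_factors]
  refine mul_le_mul_of_nonneg_left ?_ n.cast_nonneg
  exact Finset.prod_le_prod_of_subset_of_le_one
    (Nat.primeFactors_subset_of_mem_smoothNumbers h)
    (fun q _ => one_sub_inv_natCast_nonneg q)
    fun q _ _ => sub_le_self 1 (inv_nonneg.mpr q.cast_nonneg)

variable {G : Type*} [Group G] [Fintype G]

theorem exists_psi_le_card_mul_orderOf : ∃ x : G, psi G ≤ Nat.card G * orderOf x := by
  obtain ⟨x, -, hx⟩ := Finset.exists_max_image Finset.univ (fun y : G => orderOf y)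
    ⟨1, Finset.mem_univ 1⟩
  refine ⟨x, ?_⟩
  rw [Nat.card_eq_fintype_card, ← Finset.card_univ, ← smul_eq_mul]
  exact Finset.sum_le_card_nsmul _ _ _ hx

theorem exists_index_zpowers_mul_psiRatio_le {M : ℕ}
    (hM : Nat.card G ∈ Nat.smoothNumbers (M + 1)) :
    ∃ x : G, (zpowers x).index * mertensProduct M * psiRatio G ≤ 1 := by
  obtain ⟨x, hx⟩ := exists_psi_le_card_mul_orderOf (G := G)
  have hpsi : (psi G : ℚ) ≤ Nat.card G * orderOf x := by exact_mod_cast hx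
  have hidx : (orderOf x : ℚ) * (zpowers x).index = Nat.card G := by
    rw [← Nat.card_zpowers]
    exact_mod_cast (zpowers x).card_mul_index
  have hn : (0 : ℚ) < Nat.card G := by exact_mod_cast Nat.card_pos
  have htot : (0 : ℚ) < (Nat.card G).totient := by
    exact_mod_cast Nat.totient_pos.mpr Nat.card_pos
  have hmertens := mertensProduct_nonneg M
  refine ⟨x, ?_⟩
  rw [psiRatio, mul_div_assoc', div_le_one (by positivity)]
  calc (zpowers x).index * mertensProduct M * psi G
      ≤ (zpowers x).index * mertensProduct M * (Nat.card G * orderOf x) := by gcongr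
    _ = Nat.card G * (Nat.card G * mertensProduct M) := by rw [← hidx]; ring
    _ ≤ Nat.card G * (Nat.card G).totient := by
      gcongr
      exact mul_mertensProduct_le_totient hM

end MertensProduct

section Induction

open Subgroup

variable {G : Type*} [Group G] [Fintype G] {M p : ℕ}

theorem exists_index_zpowers_mul_mertensProduct_le (hM : Nat.card G ∈ Nat.smoothNumbers (M + 1))
    {c : ℚ} (hc : 0 ≤ c) (hG : 3 / 5 ≤ c * psiRatio G) :
    ∃ x : G, 3 / 5 * ((zpowers x).index * mertensProduct M) ≤ c := by
  obtain ⟨x, hx⟩ := exists_index_zpowers_mul_psiRatio_le hM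
  refine ⟨x, ?_⟩
  have hmertens := mertensProduct_nonneg M
  calc 3 / 5 * ((zpowers x).index * mertensProduct M)
      ≤ c * psiRatio G * ((zpowers x).index * mertensProduct M) := by gcongr
    _ = c * ((zpowers x).index * mertensProduct M * psiRatio G) := by ring
    _ ≤ c := mul_le_of_le_one_right hc hx

theorem derivedSeries_two_le_center_of_mem_smoothNumbers_four
    (hM : Nat.card G ∈ Nat.smoothNumbers 4) (hG : 3 / 5 ≤ 7 / 6 * psiRatio G) :
    derivedSeries G 2 ≤ center G := by
  obtain ⟨x, hx⟩ := exists_index_zpowers_mul_mertensProduct_le hM (by norm_num) hG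
  have h3 : mertensProduct 3 = 1 / 3 := by norm_num [mertensProduct_succ, mertensProduct_zero]
  rw [h3] at hx
  have hidx : (zpowers x).index < 6 := by
    have : ((zpowers x).index : ℚ) < 6 := by linarith
    exact_mod_cast this
  exact derivedSeries_two_le_center_of_index_le_five (Nat.le_of_lt_succ hidx)

theorem one_add_mul_one_add_inv_le {x : ℚ} (hx : 5 ≤ x) :
    (1 + 1 / (2 * x)) * (1 + 1 / (x * (x - 1))) ≤ 1 + 1 / (2 * (x - 2)) := by
  have hx1 : 0 < x - 1 := by linarith
  have hx2 : 0 < x - 2 := by linarith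
  have hdiff : 1 + 1 / (2 * (x - 2)) - (1 + 1 / (2 * x)) * (1 + 1 / (x * (x - 1))) =
      (x + 2) / (2 * x ^ 2 * (x - 1) * (x - 2)) := by
    field_simp
    ring
  rw [← sub_nonneg, hdiff]
  positivity

theorem lt_two_mul_and_squarefree_of_mul_mertensProduct_le (hp : p.Prime) (hp5 : 5 ≤ p) {i : ℕ}
    (hi : 3 / 5 * (i * mertensProduct p) ≤ 1 + 1 / (2 * p)) :
    i < 2 * p ∧ (p ≤ i → Squarefree i) := by
  obtain rfl | rfl | hp11 : p = 5 ∨ p = 7 ∨ 11 ≤ p := by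
    by_contra! h
    obtain ⟨h5, h7, hp11⟩ := h
    interval_cases p <;> contradiction
  · have h5 : mertensProduct 5 = 4 / 15 := by norm_num [mertensProduct_succ, mertensProduct_zero]
    rw [h5] at hi
    have : i < 7 := by
      have : (i : ℚ) < 7 := by norm_num at hi; linarith
      exact_mod_cast this
    refine ⟨by lia, fun hle => ?_⟩
    interval_cases i <;> decide +kernel
  · have h7 : mertensProduct 7 = 8 / 35 := by norm_num [mertensProduct_succ, mertensProduct_zero]
    rw [h7] at hi
    have : i < 8 := by
      have : (i : ℚ) < 8 := by norm_num at hi; linarith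
      exact_mod_cast this
    refine ⟨by lia, fun hle => ?_⟩
    interval_cases i
    decide +kernel
  · have hmertens : 16 / 7 ≤ p * mertensProduct p :=
      le_trans (by norm_num [mertensProduct_succ, mertensProduct_zero])
        (monotone_mul_mertensProduct hp11)
    have hlt : i < p := by
      by_contra! hpi
      have hpi' : (p : ℚ) * mertensProduct p ≤ i * mertensProduct p :=
        mul_le_mul_of_nonneg_right (by exact_mod_cast hpi) (mertensProduct_nonneg p)
      have hinv : 1 / (2 * p) ≤ (1 / (2 * 11) : ℚ) := by
        gcongr
        exact_mod_cast hp11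
      linarith
    exact ⟨by lia, fun h => absurd h hlt.not_ge⟩

theorem psiRatio_le_mul_psiRatio_quotient_sylow [Fact p.Prime] (P : Sylow p G)
    [(P : Subgroup G).Normal] [IsCyclic P] [Fintype (G ⧸ (P : Subgroup G))] :
    psiRatio G ≤ (1 + 1 / (p * (p - 1))) * psiRatio (G ⧸ (P : Subgroup G)) := by
  have : Fintype P := Fintype.ofFinite P
  exact (psiRatio_le_mul_psiRatio_quotient (P : Subgroup G) P.card_coprime_index).trans
    (mul_le_mul_of_nonneg_right (psiRatio_le_of_isPGroup P.2) psiRatio_nonneg)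

theorem one_add_mul_psiRatio_le_quotient_sylow [Fact p.Prime] (hp5 : 5 ≤ p) (P : Sylow p G)
    [(P : Subgroup G).Normal] [IsCyclic P] [Fintype (G ⧸ (P : Subgroup G))] :
    (1 + 1 / (2 * p)) * psiRatio G ≤
      (1 + 1 / (2 * (p - 2))) * psiRatio (G ⧸ (P : Subgroup G)) :=
  calc (1 + 1 / (2 * p)) * psiRatio G
      ≤ (1 + 1 / (2 * p)) *
          ((1 + 1 / (p * (p - 1))) * psiRatio (G ⧸ (P : Subgroup G))) := by
        gcongr
        exact psiRatio_le_mul_psiRatio_quotient_sylow P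
    _ ≤ (1 + 1 / (2 * (p - 2))) * psiRatio (G ⧸ (P : Subgroup G)) := by
        rw [← mul_assoc]
        exact mul_le_mul_of_nonneg_right
          (one_add_mul_one_add_inv_le (by exact_mod_cast hp5)) psiRatio_nonneg

theorem derivedSeries_two_le_center_of_psiRatio_ge (hM : 3 ≤ M)
    (hsmooth : Nat.card G ∈ Nat.smoothNumbers (M + 1))
    (hG : 3 / 5 ≤ (1 + 1 / (2 * M)) * psiRatio G) : derivedSeries G 2 ≤ center G := by
  induction M using Nat.strong_induction_on generalizing G with
  | _ M ih =>
  obtain rfl | hM4 := hM.eq_or_lt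
  · exact derivedSeries_two_le_center_of_mem_smoothNumbers_four hsmooth
      (hG.trans_eq (by norm_num))
  by_cases hp : M.Prime
  · have : Fact M.Prime := ⟨hp⟩
    have hM5 : 5 ≤ M := by
      refine lt_of_le_of_ne (Nat.succ_le_of_lt hM4) ?_
      rintro rfl
      contradiction
    obtain ⟨x, hx⟩ := exists_index_zpowers_mul_mertensProduct_le hsmooth (by positivity) hG
    obtain ⟨hlt, hsq⟩ := lt_two_mul_and_squarefree_of_mul_mertensProduct_le hp hM5 hx
    obtain h | ⟨P, _, _⟩ := derivedSeries_two_le_center_or_exists_normal_sylow hlt hsq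
    · exact h
    have : Fintype (G ⧸ (P : Subgroup G)) := Fintype.ofFinite _
    have hsub : M - 2 + 1 = M - 1 := by lia
    have hpred : ¬ (M - 2 + 1).Prime := fun h => by
      have := h.even_iff.mp (hsub ▸ hp.even_sub_one (by lia))
      lia
    have hsmoothP : Nat.card (G ⧸ (P : Subgroup G)) ∈ Nat.smoothNumbers (M - 2 + 1) := by
      rw [← index_eq_card, ← Nat.smoothNumbers_succ hpred, hsub, Nat.sub_add_cancel hp.one_le]
      exact index_sylow_mem_smoothNumbers P hsmooth
    refine derivedSeries_two_le_center_of_quotient_sylow P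
      (ih (M - 2) (by lia) (by lia) hsmoothP ?_)
    rw [Nat.cast_sub hp.two_le]
    exact hG.trans (one_add_mul_psiRatio_le_quotient_sylow hM5 P)
  · have hpred : (0 : ℚ) < (M - 1 : ℕ) := by exact_mod_cast (by lia : 0 < M - 1)
    have hle : ((M - 1 : ℕ) : ℚ) ≤ M := by exact_mod_cast M.sub_le 1
    have hc : 1 + 1 / (2 * (M : ℚ)) ≤ 1 + 1 / (2 * (M - 1 : ℕ)) := by gcongr
    refine ih (M - 1) (by lia) (by lia) ?_
      (hG.trans (mul_le_mul_of_nonneg_right hc psiRatio_nonneg))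
    rwa [Nat.sub_add_cancel (by lia), ← Nat.smoothNumbers_succ hp]

end Induction

theorem solvable_of_psi_ge_totient {G : Type*} [Group G] [Fintype G] (n : ℕ)
    (hn : Fintype.card G = n) (hpsi : 3 * n * n.totient ≤ 5 * psi G) :
    IsSolvable G ∧ derivedSeries G 2 ≤ Subgroup.center G := by
  have h : derivedSeries G 2 ≤ Subgroup.center G := by
    subst hn
    rw [← Nat.card_eq_fintype_card] at hpsi
    have hratio : 3 / 5 ≤ psiRatio G := by
      have hpsi' : (3 * Nat.card G * (Nat.card G).totient : ℚ) ≤ 5 * psi G := by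
        exact_mod_cast hpsi
      have hpos : (0 : ℚ) < Nat.card G * (Nat.card G).totient := by
        exact_mod_cast Nat.mul_pos Nat.card_pos (Nat.totient_pos.mpr Nat.card_pos)
      rw [psiRatio, le_div_iff₀ hpos]
      linarith
    have hsmooth : Nat.card G ∈ Nat.smoothNumbers (max 3 (Nat.card G) + 1) :=
      Nat.mem_smoothNumbers_of_lt Nat.card_pos (Nat.lt_succ_of_le (le_max_right _ _))
    exact derivedSeries_two_le_center_of_psiRatio_ge (le_max_left 3 (Nat.card G)) hsmooth <|
      hratio.trans <| le_mul_of_one_le_left psiRatio_nonneg <|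
        le_add_of_nonneg_right (by positivity)
  exact ⟨isSolvable_of_derivedSeries_two_le_center h, h⟩
end

section
/- Let G be a finite group having a cyclic maximal subgroup. Then G is solvable and the second derived subgroup G'' is contained in the center Z(G). -/
/-!
Let `C` be an abelian maximal subgroup of finite index. If `C` is normal, then `G ⧸ C` is cyclic and
`G' ≤ C`. Otherwise `C` is its own normalizer, and `C` is the centralizer of each of its noncentral
elements, so that `C` meets its other conjugates exactly in `Z(G)`. In the finite group `G ⧸ Z(G)`
the image of `C`, again denoted `C`, is thus malnormal. Being abelian, it meets the kernel `K` of
the transfer to it trivially, so each of its nontrivial elements acts on `K` as an automorphism `φ`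
without fixed points. Then `k ↦ k / φ k` is a bijection of `K` and of every `φ`-invariant subgroup,
whence `φ` stabilizes exactly one Sylow `p`-subgroup of `K`. By uniqueness, that subgroup is
invariant under all of `C`; by maximality of `C`, the only `C`-invariant subgroups of `K` are `⊥`
and `K`. Hence `K` is a `p`-group, and `K'`, being proper and `C`-invariant, is trivial.
-/

open Subgroup

open scoped Pointwise

section FixedPointFree

variable {F K X : Type*} [Group K] [FunLike F K K] [MonoidHomClass F K K] {φ : F}

theorem mem_of_div_map_mem_of_fixedPointFree (hφ : MonoidHom.FixedPointFree φ) {S : Subgroup K}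
    [Finite S] (hS : ∀ s ∈ S, φ s ∈ S) {k : K} (hk : k / φ k ∈ S) : k ∈ S := by
  let ψ : S →* S := ((φ : K →* K).comp S.subtype).codRestrict S fun s => hS s s.2
  have hψ : MonoidHom.FixedPointFree ψ := fun s hs =>
    Subtype.ext (hφ s (congrArg Subtype.val hs))
  obtain ⟨s, hs⟩ := hψ.commutatorMap_surjective ⟨k / φ k, hk⟩
  rw [← hφ.commutatorMap_injective (congrArg Subtype.val hs)]
  exact s.2

variable [Finite K] [MulAction K X] [MulAction.IsPretransitive K X]

theorem existsUnique_fixedPoint_of_fixedPointFree [Nonempty X] (hφ : MonoidHom.FixedPointFree φ)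
    {σ : X → X} (hσ : ∀ (k : K) (x : X), σ (k • x) = φ k • σ x) : ∃! x, σ x = x := by
  inhabit X
  obtain ⟨k, hk⟩ := MulAction.exists_smul_eq K (σ default) (default : X)
  obtain ⟨y, rfl⟩ := hφ.commutatorMap_surjective k
  have hfix : σ (y⁻¹ • default) = y⁻¹ • (default : X) := by
    rw [eq_inv_smul_iff, hσ, smul_smul, map_inv, ← div_eq_mul_inv]
    exact hk
  generalize y⁻¹ • (default : X) = x at hfix
  refine ⟨x, hfix, fun z hz => ?_⟩
  obtain ⟨k, rfl⟩ := MulAction.exists_smul_eq K x z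
  have hkx : φ k • x = k • x := by rw [← hz, hσ, hfix]
  have hinv : ∀ s ∈ MulAction.stabilizer K x, φ s ∈ MulAction.stabilizer K x := by
    intro s hs
    rw [MulAction.mem_stabilizer_iff] at hs ⊢
    rw [← hfix, ← hσ, hs]
  have hdiv : k⁻¹ / φ k⁻¹ ∈ MulAction.stabilizer K x := by
    rw [MulAction.mem_stabilizer_iff, map_inv, div_inv_eq_mul, mul_smul, hkx, inv_smul_smul]
  exact inv_mem_iff.mp (mem_of_div_map_mem_of_fixedPointFree hφ hinv hdiv)

theorem existsUnique_sylow_smul_eq {φ : MulAut K} (hφ : MonoidHom.FixedPointFree φ) (p : ℕ)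
    [Fact p.Prime] : ∃! P : Sylow p K, φ • P = P := by
  refine existsUnique_fixedPoint_of_fixedPointFree hφ fun k P => ?_
  have hconj : φ * MulAut.conj k = MulAut.conj (φ k) * φ := by ext; simp
  rw [Sylow.smul_def, Sylow.smul_def, ← mul_smul, hconj, mul_smul]

end FixedPointFree

section Group

variable {G H : Type*} [Group G] [Group H] {C K : Subgroup G}

theorem isSolvable_of_derivedSeries_le_center {n : ℕ} (h : derivedSeries G n ≤ center G) :
    Group.IsSolvable G := by
  refine ⟨n + 1, ?_⟩
  rw [derivedSeries_succ, commutator_eq_bot_iff_le_centralizer]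
  exact h.trans (center_le_centralizer _)

theorem derivedSeries_two_le_commutator (h : commutator G ≤ K) : derivedSeries G 2 ≤ ⁅K, K⁆ := by
  rw [derivedSeries_succ, derivedSeries_one]
  exact commutator_mono h h

theorem commutator_le_of_isCoatom [C.Normal] (hC : IsCoatom C) : commutator G ≤ C := by
  obtain ⟨g, -, hg⟩ := SetLike.exists_of_lt hC.lt_top
  have hsup : C ⊔ zpowers g = ⊤ := hC.2 _ (left_lt_sup.mpr fun h => hg (h (mem_zpowers g)))
  exact Normal.commutator_le_of_self_sup_commutative_eq_top hsup inferInstance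

theorem derivedSeries_two_eq_bot_of_isCoatom [IsMulCommutative C] [C.Normal] (hC : IsCoatom C) :
    derivedSeries G 2 = ⊥ :=
  eq_bot_mono (derivedSeries_two_le_commutator (commutator_le_of_isCoatom hC))
    (commutator_eq_bot_iff_le_centralizer.mpr C.le_centralizer)

theorem isCoatom_map_of_ker_le {f : G →* H} (hf : Function.Surjective f) (hC : IsCoatom C)
    (hker : f.ker ≤ C) : IsCoatom (C.map f) := by
  let gi : GaloisInsertion (map f) (comap f) :=
    (gc_map_comap f).toGaloisInsertion fun L => (map_comap_eq_self_of_surjective hf L).ge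
  apply gi.isCoatom_of_image
  rwa [comap_map_eq_self hker]

theorem eq_bot_or_eq_of_le_normalizer (hC : IsCoatom C) (hKC : Disjoint K C) {L : Subgroup G}
    (hLK : L ≤ K) (hL : C ≤ normalizer (L : Set G)) : L = ⊥ ∨ L = K := by
  rcases hC.le_iff.mp (le_sup_right : C ≤ L ⊔ C) with htop | hsup
  · refine Or.inr (hLK.antisymm fun k hk => ?_)
    have hkLC : k ∈ (L : Set G) * C := by
      rw [← coe_mul_of_right_le_normalizer_left L C hL, htop]
      exact mem_top k
    obtain ⟨l, hl, c, hc, rfl⟩ := hkLC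
    obtain rfl : c = 1 := disjoint_def.mp hKC ((K.mul_mem_cancel_left (hLK hl)).mp hk) hc
    simpa only [mul_one, SetLike.mem_coe] using hl
  · exact Or.inl (disjoint_self.mp (hKC.mono hLK (sup_eq_right.mp hsup)))

end Group

section ComplementOfMaximal

variable {G : Type*} [Group G] {C K : Subgroup G} [IsMulCommutative C] [K.Normal] [Finite K] {c : G}

theorem exists_sylow_le_normalizer_of_fixedPointFree (hc : c ∈ C)
    (hfix : MonoidHom.FixedPointFree (MulAut.conjNormal c : MulAut K)) (p : ℕ) [Fact p.Prime] :
    ∃ P : Sylow p K, C ≤ normalizer (P.map K.subtype : Set G) := by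
  obtain ⟨P, hcP, hunique⟩ := existsUnique_sylow_smul_eq hfix p
  have hCP (d : G) (hd : d ∈ C) : (MulAut.conjNormal d : MulAut K) • P = P := by
    apply hunique
    rw [← mul_smul, ← map_mul, setLike_mul_comm hc hd, map_mul, mul_smul, hcP]
  refine ⟨P, le_normalizer_iff.mpr ?_⟩
  rintro d hd _ ⟨x, hx, rfl⟩
  have hdx : MulAut.conjNormal d x ∈ P := by
    rw [← hCP d hd]
    exact smul_mem_pointwise_smul x (MulAut.conjNormal d : MulAut K) (P : Subgroup K) hx
  exact ⟨_, hdx, MulAut.conjNormal_apply d x⟩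

theorem isPGroup_of_fixedPointFree (hC : IsCoatom C) (hKC : Disjoint K C) (hc : c ∈ C)
    (hfix : MonoidHom.FixedPointFree (MulAut.conjNormal c : MulAut K)) {p : ℕ} [Fact p.Prime]
    (hp : p ∣ Nat.card K) : IsPGroup p K := by
  obtain ⟨P, hCP⟩ := exists_sylow_le_normalizer_of_fixedPointFree hc hfix p
  have hne : P.map K.subtype ≠ ⊥ := by
    rw [Ne, map_eq_bot_iff_of_injective _ K.subtype_injective]
    exact P.ne_bot_of_dvd_card hp
  rw [← (eq_bot_or_eq_of_le_normalizer hC hKC (map_subtype_le _) hCP).resolve_left hne]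
  exact P.isPGroup'.map K.subtype

theorem commutator_eq_bot_of_fixedPointFree (hC : IsCoatom C) (hKC : Disjoint K C) (hc : c ∈ C)
    (hfix : MonoidHom.FixedPointFree (MulAut.conjNormal c : MulAut K)) : ⁅K, K⁆ = ⊥ := by
  rcases subsingleton_or_nontrivial K with hK | hK
  · rw [eq_bot_of_subsingleton K, commutator_bot_left]
  obtain ⟨p, hp, hpK⟩ := Nat.exists_prime_and_dvd (Finite.one_lt_card (α := K)).ne'
  have : Fact p.Prime := ⟨hp⟩
  have : Group.IsNilpotent K := (isPGroup_of_fixedPointFree hC hKC hc hfix hpK).isNilpotent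
  refine (eq_bot_or_eq_of_le_normalizer hC hKC (commutator_le_self K)
    le_normalizer_of_normal).resolve_right fun h => ?_
  refine (Group.IsSolvable.commutator_lt_top_of_nontrivial K).ne
    (map_injective K.subtype_injective ?_)
  rw [map_subtype_commutator, h, ← MonoidHom.range_eq_map, range_subtype]

end ComplementOfMaximal

/-- A subgroup is malnormal if it meets its conjugates by outside elements trivially. In a finite
group, the nontrivial proper malnormal subgroups are the Frobenius complements. -/
def IsMalnormal {G : Type*} [Group G] (H : Subgroup G) : Prop :=
  ∀ g ∉ H, ∀ h ∈ H, g⁻¹ * h * g ∈ H → h = 1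

namespace IsMalnormal

variable {G : Type*} [Group G] {H : Subgroup G}

theorem fixedPointFree_conjNormal (hH : IsMalnormal H) {K : Subgroup G} [K.Normal]
    (hKH : Disjoint K H) {h : G} (hh : h ∈ H) (hne : h ≠ 1) :
    MonoidHom.FixedPointFree (MulAut.conjNormal h : MulAut K) := by
  intro k hk
  have hcomm : h * k = k * h := by
    simpa only [MulAut.conjNormal_apply, mul_inv_eq_iff_eq_mul] using congrArg Subtype.val hk
  have hkH : (k : G) ∈ H := by
    by_contra hkH
    refine hne (hH k hkH h hh ?_)
    rwa [mul_assoc, hcomm, inv_mul_cancel_left]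
  exact Subtype.ext (disjoint_def.mp hKH k.2 hkH)

theorem fixedPoints_quotient (hH : IsMalnormal H) {D : Subgroup G} (hDH : D ≤ H) (hD : D ≠ ⊥) :
    MulAction.fixedPoints D (G ⧸ H) = {((1 : G) : G ⧸ H)} := by
  obtain ⟨d, hd, hd1⟩ := D.bot_or_exists_ne_one.resolve_left hD
  refine Set.Subset.antisymm (fun x hx => ?_) ?_
  · obtain ⟨g, rfl⟩ := QuotientGroup.mk_surjective x
    by_contra hg
    have hgH : g ∉ H := fun h => hg (QuotientGroup.eq.mpr (by simpa using h))
    have hdg : g⁻¹ * d * g ∈ H := by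
      simpa [Subgroup.smul_def, mul_assoc] using QuotientGroup.eq.mp (hx ⟨d, hd⟩).symm
    exact hd1 (hH g hgH d (hDH hd) hdg)
  · rintro _ rfl ⟨x, hx⟩
    exact QuotientGroup.eq.mpr (by simpa using hDH hx)

variable [Finite G]

theorem coprime_card_index (hH : IsMalnormal H) : (Nat.card H).Coprime H.index := by
  refine Nat.coprime_of_dvd fun p hp hpH hpi => ?_
  have : Fact p.Prime := ⟨hp⟩
  obtain ⟨P⟩ : Nonempty (Sylow p H) := inferInstance
  have hne : P.map H.subtype ≠ ⊥ := by
    rw [Ne, map_eq_bot_iff_of_injective _ H.subtype_injective]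
    exact P.ne_bot_of_dvd_card hpH
  have hmod : H.index ≡ 1 [MOD p] := by
    have hfix := (P.isPGroup'.map H.subtype).card_modEq_card_fixedPoints (G ⧸ H)
    rwa [hH.fixedPoints_quotient (map_subtype_le _) hne, Nat.card_coe_set_eq,
      Set.ncard_singleton] at hfix
  exact hp.not_dvd_one ((hmod.dvd_iff dvd_rfl).mp hpi)

variable [IsMulCommutative H]

open scoped IsMulCommutative in
theorem disjoint_ker_transfer (hH : IsMalnormal H) :
    Disjoint (MonoidHom.transfer (MonoidHom.id H)).ker H := by
  rw [disjoint_def]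
  intro h hker hh
  have hconj (k : ℕ) (g : G) (hg : g⁻¹ * h ^ k * g ∈ H) : g⁻¹ * h ^ k * g = h ^ k := by
    by_cases hgH : g ∈ H
    · rw [mul_assoc, setLike_mul_comm (H.pow_mem hh k) hgH, inv_mul_cancel_left]
    · rw [hH g hgH _ (H.pow_mem hh k) hg, mul_one, inv_mul_cancel]
  rw [MonoidHom.mem_ker, MonoidHom.transfer_eq_pow _ h hconj] at hker
  have hindex : h ^ H.index = 1 := congrArg Subtype.val hker
  have hcard : h ^ Nat.card H = 1 := congrArg Subtype.val (pow_card_eq_one' (x := (⟨h, hh⟩ : H)))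
  rw [← orderOf_eq_one_iff]
  exact Nat.eq_one_of_dvd_coprimes hH.coprime_card_index
    (orderOf_dvd_of_pow_eq_one hcard) (orderOf_dvd_of_pow_eq_one hindex)

theorem derivedSeries_two_eq_bot (hH : IsMalnormal H) (hmax : IsCoatom H) :
    derivedSeries G 2 = ⊥ := by
  rcases H.bot_or_exists_ne_one with rfl | ⟨h, hh, hne⟩
  · exact derivedSeries_two_eq_bot_of_isCoatom hmax
  open scoped IsMulCommutative in
  let f : G →* H := MonoidHom.transfer (MonoidHom.id H)
  have hdisj : Disjoint f.ker H := hH.disjoint_ker_transfer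
  exact eq_bot_mono (derivedSeries_two_le_commutator (Abelianization.commutator_subset_ker f))
    (commutator_eq_bot_of_fixedPointFree hmax hdisj hh
      (hH.fixedPointFree_conjNormal hdisj hh hne))

end IsMalnormal

section AbelianMaximal

variable {G : Type*} [Group G] {C : Subgroup G} [IsMulCommutative C]

theorem centralizer_singleton_eq_of_notMem_center (hC : IsCoatom C) {c : G} (hc : c ∈ C)
    (hcZ : c ∉ center G) : centralizer {c} = C := by
  have hle : C ≤ centralizer {c} := fun x hx =>
    mem_centralizer_singleton_iff.mpr (setLike_mul_comm hx hc)
  refine (hC.le_iff.mp hle).resolve_left fun htop => hcZ (mem_center_iff.mpr fun x => ?_)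
  exact mem_centralizer_singleton_iff.mp (htop ▸ mem_top x)

theorem mem_center_of_conj_mem (hC : IsCoatom C) (hN : normalizer (C : Set G) = C) {g c : G}
    (hg : g ∉ C) (hc : c ∈ C) (hgc : g⁻¹ * c * g ∈ C) : c ∈ center G := by
  by_contra hcZ
  have hgcZ : g⁻¹ * c * g ∉ center G := fun h => hcZ <| by
    simpa [mul_assoc] using Normal.conj_mem inferInstance _ h g
  refine hg (hN ▸ mem_normalizer_iff.mpr fun x => ?_)
  calc x ∈ C ↔ x ∈ centralizer {g⁻¹ * c * g} := by
        rw [centralizer_singleton_eq_of_notMem_center hC hgc hgcZ]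
    _ ↔ g * x * g⁻¹ ∈ centralizer {c} := by
        rw [mem_centralizer_singleton_iff, mem_centralizer_singleton_iff,
          ← mul_right_inj g, ← mul_left_inj g⁻¹]
        simp [mul_assoc]
    _ ↔ g * x * g⁻¹ ∈ C := by rw [centralizer_singleton_eq_of_notMem_center hC hc hcZ]

theorem normalCore_le_center (hC : IsCoatom C) (hN : normalizer (C : Set G) = C) :
    C.normalCore ≤ center G := by
  obtain ⟨g, -, hg⟩ := SetLike.exists_of_lt hC.lt_top
  intro c hc
  refine mem_center_of_conj_mem hC hN hg (C.normalCore_le hc) ?_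
  simpa only [inv_inv] using hc g⁻¹

theorem isMalnormal_map_mk'_center (hC : IsCoatom C) (hN : normalizer (C : Set G) = C) :
    IsMalnormal (C.map (QuotientGroup.mk' (center G))) := by
  rintro g hg _ ⟨c, hc, rfl⟩ hgc
  obtain ⟨g, rfl⟩ := QuotientGroup.mk'_surjective _ g
  have hker : (QuotientGroup.mk' (center G)).ker ≤ C :=
    (QuotientGroup.ker_mk' _).trans_le ((center_le_normalizer _).trans_eq hN)
  rw [← map_inv, ← map_mul, ← map_mul, ← mem_comap, comap_map_eq_self hker] at hgc
  exact (QuotientGroup.eq_one_iff c).mpr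
    (mem_center_of_conj_mem hC hN (fun h => hg (mem_map_of_mem _ h)) hc hgc)

theorem derivedSeries_two_le_center_of_normalizer_eq [C.FiniteIndex] (hC : IsCoatom C)
    (hN : normalizer (C : Set G) = C) : derivedSeries G 2 ≤ center G := by
  have : (center G).FiniteIndex := finiteIndex_of_le (normalCore_le_center hC hN)
  have hsurj := QuotientGroup.mk'_surjective (center G)
  have hmax : IsCoatom (C.map (QuotientGroup.mk' (center G))) :=
    isCoatom_map_of_ker_le hsurj hC
      ((QuotientGroup.ker_mk' _).trans_le ((center_le_normalizer _).trans_eq hN))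
  rw [← QuotientGroup.ker_mk' (center G), ← Subgroup.map_eq_bot_iff, map_derivedSeries_eq hsurj]
  exact (isMalnormal_map_mk'_center hC hN).derivedSeries_two_eq_bot hmax

theorem solvable_of_cyclic_maximal_general [C.FiniteIndex] (hC : IsCoatom C) :
    Group.IsSolvable G ∧ derivedSeries G 2 ≤ center G := by
  suffices h : derivedSeries G 2 ≤ center G from ⟨isSolvable_of_derivedSeries_le_center h, h⟩
  rcases hC.le_iff.mp (le_normalizer : C ≤ normalizer (C : Set G)) with hN | hN
  · have : C.Normal := normalizer_eq_top_iff.mp hN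
    exact (derivedSeries_two_eq_bot_of_isCoatom hC).trans_le bot_le
  · exact derivedSeries_two_le_center_of_normalizer_eq hC hN

end AbelianMaximal

theorem solvable_of_cyclic_maximal {G : Type*} [Group G] [Fintype G]
    (C : Subgroup G) (hCcyc : IsCyclic C) (hCmax : IsCoatom C) :
    IsSolvable G ∧ derivedSeries G 2 ≤ Subgroup.center G := by
  have := hCcyc.isMulCommutative
  exact solvable_of_cyclic_maximal_general hCmax
end
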